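/- Let H be a real Hilbert space, let λ ∈ [0,∞), s ∈ {−1,1}, let J be a unitary operator on H, and let n ∈ H be a unit vector. Then W_{λ,c}[s,n,J] converges to W_{λ,∞}[s,n,J] in the uniform operator topology as c → ∞; that is, the operator norm ‖W_{λ,c}[s,n,J] − W_{λ,∞}[s,n,J]‖ on M(H) tends to 0 as the real parameter c tends to +∞ (c ranging over (λ,∞)). -/

import Mathlib

open scoped InnerProductSpace

/-- Generalized Lorentz transform `W_{λ,c}[s,n,J]` on `M(H) = ℝ × H` (case `λ < ∞`, `c < ∞`). -/
noncomputable def Wfin {H : Type*} [NormedAddCommGroup H] [InnerProductSpace ℝ H]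
    (lam c s : ℝ) (n : H) (J : H ≃ₗᵢ[ℝ] H) (w : ℝ × H) : ℝ × H :=
  ((s * w.1 - lam / c ^ 2 * ⟪n, w.2⟫_ℝ) / Real.sqrt |1 - lam ^ 2 / c ^ 2|,
    J (((lam * w.1 - s * ⟪n, w.2⟫_ℝ) / Real.sqrt |1 - lam ^ 2 / c ^ 2|) • n
      + (w.2 - ⟪n, w.2⟫_ℝ • n)))

/-- Generalized Lorentz transform `W_{λ,∞}[s,n,J]` on `M(H) = ℝ × H` (case `c = ∞`). -/
noncomputable def Wgal {H : Type*} [NormedAddCommGroup H] [InnerProductSpace ℝ H]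
    (lam s : ℝ) (n : H) (J : H ≃ₗᵢ[ℝ] H) (w : ℝ × H) : ℝ × H :=
  (s * w.1, J ((lam * w.1 - s * ⟪n, w.2⟫_ℝ) • n + (w.2 - ⟪n, w.2⟫_ℝ • n)))

/-- Generalized Lorentz transform `W_{∞,c}[s,n,J]` on `M(H) = ℝ × H` (case `λ = ∞`). -/
noncomputable def Wtach {H : Type*} [NormedAddCommGroup H] [InnerProductSpace ℝ H]
    (c s : ℝ) (n : H) (J : H ≃ₗᵢ[ℝ] H) (w : ℝ × H) : ℝ × H :=
  (-⟪n, w.2⟫_ℝ / c, J ((c * w.1) • n + (w.2 - ⟪n, w.2⟫_ℝ • n)))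

/-- The continuous linear functional `w ↦ ⟨n, w⟩ = ⟨n, Xw⟩` on `M(H) = ℝ × H`. -/
noncomputable def innerF {H : Type*} [NormedAddCommGroup H] [InnerProductSpace ℝ H]
    (n : H) : (ℝ × H) →L[ℝ] ℝ :=
  (innerSL ℝ n).comp (ContinuousLinearMap.snd ℝ ℝ H)

/-- `W_{λ,c}[s,n,J]` (`λ, c` finite) as a continuous linear operator on `M(H)`. -/
noncomputable def WfinL {H : Type*} [NormedAddCommGroup H] [InnerProductSpace ℝ H]
    (lam c s : ℝ) (n : H) (J : H ≃ₗᵢ[ℝ] H) : (ℝ × H) →L[ℝ] (ℝ × H) :=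
  ((s / Real.sqrt |1 - lam ^ 2 / c ^ 2|) • ContinuousLinearMap.fst ℝ ℝ H
      - (lam / c ^ 2 / Real.sqrt |1 - lam ^ 2 / c ^ 2|) • innerF n).prod
    ((J.toContinuousLinearEquiv : H →L[ℝ] H).comp
      ((((lam / Real.sqrt |1 - lam ^ 2 / c ^ 2|) • ContinuousLinearMap.fst ℝ ℝ H
          - (s / Real.sqrt |1 - lam ^ 2 / c ^ 2|) • innerF n).smulRight n)
        + (ContinuousLinearMap.snd ℝ ℝ H - (innerF n).smulRight n)))

/-- `W_{λ,∞}[s,n,J]` as a continuous linear operator on `M(H)`. -/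
noncomputable def WgalL {H : Type*} [NormedAddCommGroup H] [InnerProductSpace ℝ H]
    (lam s : ℝ) (n : H) (J : H ≃ₗᵢ[ℝ] H) : (ℝ × H) →L[ℝ] (ℝ × H) :=
  (s • ContinuousLinearMap.fst ℝ ℝ H).prod
    ((J.toContinuousLinearEquiv : H →L[ℝ] H).comp
      (((lam • ContinuousLinearMap.fst ℝ ℝ H - s • innerF n).smulRight n)
        + (ContinuousLinearMap.snd ℝ ℝ H - (innerF n).smulRight n)))

/-!
Up to the Lorentz factor `γ`, the transform `W_{λ,c}` is a perturbation of `W_{λ,∞}` by one bounded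
operator: with `G` the part of `W_{λ,∞}` acting on time and on the direction `n`, and `P` the part
acting on the orthogonal complement of `n`,
`W_{λ,∞} = G + P` and `W_{λ,c} = γ • (G - (λ / c ^ 2) • R) + P`, where `R w = (⟨n, w⟩, 0)`.
Of the right-hand side only the scalars `γ → 1` and `λ / c ^ 2 → 0` depend on `c`.
-/

section Lorentz

open Filter Topology

/-- The Lorentz factor `γ = 1 / √|1 - λ² / c²|`; the absolute value admits speeds `λ > c`. At the
singular speed `λ = c > 0` it takes the junk value `0`. -/
noncomputable def lorentzFactor (lam c : ℝ) : ℝ :=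
  (Real.sqrt |1 - lam ^ 2 / c ^ 2|)⁻¹

theorem tendsto_lorentzFactor_atTop (lam : ℝ) :
    Tendsto (lorentzFactor lam) atTop (𝓝 1) := by
  have h_ratio : Tendsto (fun c : ℝ => lam ^ 2 / c ^ 2) atTop (𝓝 0) :=
    (tendsto_pow_atTop two_ne_zero).const_div_atTop _
  have h_sqrt : Tendsto (fun c : ℝ => Real.sqrt |1 - lam ^ 2 / c ^ 2|) atTop (𝓝 1) := by
    simpa using (h_ratio.const_sub 1).abs.sqrt
  rw [← inv_one]
  exact h_sqrt.inv₀ one_ne_zero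

variable {H : Type*} [NormedAddCommGroup H] [InnerProductSpace ℝ H]

/-- The longitudinal part `G` of `W_{λ,∞}[s,n,J]`: its action on time and on the direction `n`. -/
noncomputable def galileanLongitudinal (lam s : ℝ) (n : H) (J : H ≃ₗᵢ[ℝ] H) :
    (ℝ × H) →L[ℝ] (ℝ × H) :=
  (s • ContinuousLinearMap.fst ℝ ℝ H).prod
    ((J.toContinuousLinearEquiv : H →L[ℝ] H).comp
      ((lam • ContinuousLinearMap.fst ℝ ℝ H - s • innerF n).smulRight n))

/-- The transverse part `P = J ∘ X₁⊥[n]`, common to all the transforms `W_{λ,c}[s,n,J]`. -/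
noncomputable def transversePart (n : H) (J : H ≃ₗᵢ[ℝ] H) : (ℝ × H) →L[ℝ] (ℝ × H) :=
  (0 : (ℝ × H) →L[ℝ] ℝ).prod
    ((J.toContinuousLinearEquiv : H →L[ℝ] H).comp
      (ContinuousLinearMap.snd ℝ ℝ H - (innerF n).smulRight n))

/-- The operator `R w = ⟨n, w⟩ e₀`, through which position enters the time coordinate of
`W_{λ,c}[s,n,J]` (the relativity of simultaneity). -/
noncomputable def simultaneityShift (n : H) : (ℝ × H) →L[ℝ] (ℝ × H) :=
  (innerF n).prod 0

theorem galileanLongitudinal_apply (lam s : ℝ) (n : H) (J : H ≃ₗᵢ[ℝ] H) (w : ℝ × H) :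
    galileanLongitudinal lam s n J w =
      (s * w.1, J ((lam * w.1 - s * ⟪n, w.2⟫_ℝ) • n)) :=
  rfl

theorem transversePart_apply (n : H) (J : H ≃ₗᵢ[ℝ] H) (w : ℝ × H) :
    transversePart n J w = (0, J (w.2 - ⟪n, w.2⟫_ℝ • n)) :=
  rfl

theorem simultaneityShift_apply (n : H) (w : ℝ × H) :
    simultaneityShift n w = (⟪n, w.2⟫_ℝ, 0) :=
  rfl

theorem WgalL_apply (lam s : ℝ) (n : H) (J : H ≃ₗᵢ[ℝ] H) (w : ℝ × H) :
    WgalL lam s n J w = Wgal lam s n J w :=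
  rfl

theorem WgalL_eq_galileanLongitudinal_add_transversePart (lam s : ℝ) (n : H) (J : H ≃ₗᵢ[ℝ] H) :
    WgalL lam s n J = galileanLongitudinal lam s n J + transversePart n J := by
  refine ContinuousLinearMap.ext fun w => ?_
  rw [WgalL_apply, add_apply, galileanLongitudinal_apply, transversePart_apply,
    Prod.mk_add_mk, add_zero, ← map_add, Wgal]

theorem WfinL_apply (lam c s : ℝ) (n : H) (J : H ≃ₗᵢ[ℝ] H) (w : ℝ × H) :
    WfinL lam c s n J w = Wfin lam c s n J w := by
  simp only [Wfin, sub_div, mul_div_right_comm]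
  rfl

theorem WfinL_eq_lorentzFactor_smul_add_transversePart (lam c s : ℝ) (n : H) (J : H ≃ₗᵢ[ℝ] H) :
    WfinL lam c s n J =
      lorentzFactor lam c • (galileanLongitudinal lam s n J - (lam / c ^ 2) • simultaneityShift n)
        + transversePart n J := by
  refine ContinuousLinearMap.ext fun w => ?_
  simp only [WfinL_apply, Wfin, add_apply, smul_apply, sub_apply, galileanLongitudinal_apply,
    simultaneityShift_apply, transversePart_apply, lorentzFactor, Prod.smul_mk, Prod.mk_sub_mk,
    Prod.mk_add_mk, smul_eq_mul, smul_zero, sub_zero, add_zero, map_add, map_smul, smul_smul,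
    div_eq_inv_mul]

theorem tendsto_WfinL_atTop (lam s : ℝ) (n : H) (J : H ≃ₗᵢ[ℝ] H) :
    Tendsto (fun c => WfinL lam c s n J) atTop (𝓝 (WgalL lam s n J)) := by
  have h_ratio : Tendsto (fun c : ℝ => lam / c ^ 2) atTop (𝓝 0) :=
    (tendsto_pow_atTop two_ne_zero).const_div_atTop lam
  have h_perturbed : Tendsto
      (fun c : ℝ => galileanLongitudinal lam s n J - (lam / c ^ 2) • simultaneityShift n)
      atTop (𝓝 (galileanLongitudinal lam s n J)) := by
    simpa using (h_ratio.smul_const (simultaneityShift n)).const_sub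
      (galileanLongitudinal lam s n J)
  have h_sum := ((tendsto_lorentzFactor_atTop lam).smul h_perturbed).add_const (transversePart n J)
  rw [one_smul, ← WgalL_eq_galileanLongitudinal_add_transversePart] at h_sum
  simpa only [WfinL_eq_lorentzFactor_smul_add_transversePart] using h_sum

theorem stmt13_general (lam s : ℝ) (J : H ≃ₗᵢ[ℝ] H) (n : H) :
    (∀ c w, WfinL lam c s n J w = Wfin lam c s n J w) ∧
    (∀ w, WgalL lam s n J w = Wgal lam s n J w) ∧
    Tendsto (fun c : ℝ => ‖WfinL lam c s n J - WgalL lam s n J‖) atTop (𝓝 0) :=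
  ⟨fun c => WfinL_apply lam c s n J, WgalL_apply lam s n J,
    (tendsto_iff_norm_sub_tendsto_zero (E := (ℝ × H) →L[ℝ] (ℝ × H))).mp
      (tendsto_WfinL_atTop lam s n J)⟩

end Lorentz

/-- `W_{λ,c}[s,n,J] → W_{λ,∞}[s,n,J]` in the uniform operator topology as
`c → +∞`, i.e. the operator norm of the difference tends to `0`.  (The operators `WfinL`
and `WgalL` realize the pointwise formulas `Wfin` and `Wgal`.) -/
theorem stmt13 {H : Type*} [NormedAddCommGroup H] [InnerProductSpace ℝ H] [CompleteSpace H]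
    (lam : ℝ) (hlam : 0 ≤ lam) (s : ℝ) (hs : s = 1 ∨ s = -1)
    (J : H ≃ₗᵢ[ℝ] H) (n : H) (hn : ‖n‖ = 1) :
    (∀ c w, WfinL lam c s n J w = Wfin lam c s n J w) ∧
    (∀ w, WgalL lam s n J w = Wgal lam s n J w) ∧
    Filter.Tendsto (fun c : ℝ => ‖WfinL lam c s n J - WgalL lam s n J‖)
      Filter.atTop (nhds 0) :=
  stmt13_general lam s J n
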